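/- For every integer d ≥ 1 there is a constant C(d) such that the following holds. Let P(x) = Σ_{i=0}^d c_i x^i be a real polynomial of degree at most d in one variable with max_{1 ≤ i ≤ d} |c_i| ≥ 1. Then for every δ > 0, the Lebesgue measure of the set {x ∈ [−1,1] : |P(x)| ≤ δ} is at most C(d)·δ^{1/d}. -/

import Mathlib

open Polynomial MeasureTheory

/-- A set of real numbers of measure greater than `2 * r * n` contains `n + 1` points that are
pairwise at distance at least `r`. -/
theorem exists_finset_separated_of_lt_volume {E : Set ℝ} {r : ℝ} (hr : 0 < r) {n : ℕ}
    (hE : ENNReal.ofReal (2 * r * n) < volume E) :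
    ∃ s : Finset ℝ, s.card = n + 1 ∧ (s : Set ℝ) ⊆ E ∧
      (s : Set ℝ).Pairwise fun x y => r ≤ |x - y| := by
  suffices h : ∀ k ≤ n + 1, ∃ s : Finset ℝ, s.card = k ∧ (s : Set ℝ) ⊆ E ∧
      (s : Set ℝ).Pairwise fun x y => r ≤ |x - y| from h _ le_rfl
  intro k
  induction k with
  | zero => exact fun _ => ⟨∅, by simp⟩
  | succ k ih =>
    intro hk
    obtain ⟨s, hcard, hsub, hsep⟩ := ih (by omega)
    have hballs : volume (⋃ y ∈ s, Metric.ball y r) ≤ ENNReal.ofReal (2 * r * n) := by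
      calc volume (⋃ y ∈ s, Metric.ball y r)
          ≤ ∑ y ∈ s, volume (Metric.ball y r) := measure_biUnion_finset_le _ _
        _ = ENNReal.ofReal (2 * r * k) := by
          simp only [Real.volume_ball, Finset.sum_const, hcard, nsmul_eq_mul]
          rw [mul_comm (2 * r), ENNReal.ofReal_mul (Nat.cast_nonneg k), ENNReal.ofReal_natCast]
        _ ≤ ENNReal.ofReal (2 * r * n) := by
          have : (k : ℝ) ≤ n := by exact_mod_cast Nat.le_of_succ_le_succ hk
          gcongr
    obtain ⟨x, hxE, hx⟩ : ∃ x ∈ E, x ∉ ⋃ y ∈ s, Metric.ball y r :=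
      Set.not_subset.1 fun h => (hballs.trans_lt hE).not_ge (measure_mono h)
    have hfar : ∀ y ∈ s, r ≤ |x - y| := by
      simpa [Real.dist_eq] using hx
    have hxs : x ∉ s := fun h => by simpa using hr.trans_le (hfar x h)
    refine ⟨insert x s, by simp [hxs, hcard], ?_, ?_⟩
    · simpa [Set.insert_subset_iff] using ⟨hxE, hsub⟩
    · rw [Finset.coe_insert, Set.pairwise_insert]
      exact ⟨hsep, fun y hy _ => ⟨hfar y hy, abs_sub_comm x y ▸ hfar y hy⟩⟩

/-- The coefficients of a product of Lagrange basis divisors with nodes in `[-1, 1]` at distance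
at least `r` from `x`. -/
theorem abs_coeff_prod_basisDivisor_le {r x : ℝ} (hr : 0 < r) (s : Finset ℝ)
    (hs : ∀ y ∈ s, |y| ≤ 1) (hsep : ∀ y ∈ s, r ≤ |x - y|) (k : ℕ) :
    |(∏ y ∈ s, Lagrange.basisDivisor x y).coeff k| ≤ (2 / r) ^ s.card := by
  induction s using Finset.induction_on generalizing k with
  | empty =>
    rw [Finset.prod_empty, coeff_one]
    split_ifs <;> simp
  | insert y s hy ih =>
    rw [Finset.forall_mem_insert] at hs hsep
    have ih := ih hs.2 hsep.2
    set Q := ∏ y ∈ s, Lagrange.basisDivisor x y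
    have hshift : |(X * Q).coeff k| ≤ (2 / r) ^ s.card := by
      cases k with
      | zero => simp only [coeff_X_mul_zero, abs_zero]; positivity
      | succ k => simpa only [coeff_X_mul] using ih k
    have hinv : |(x - y)⁻¹| ≤ r⁻¹ := by
      rw [abs_inv]
      exact inv_anti₀ hr hsep.1
    have hdiff : |(X * Q).coeff k - y * Q.coeff k| ≤ 2 * (2 / r) ^ s.card := by
      have hmul : |y * Q.coeff k| ≤ 1 * (2 / r) ^ s.card := by
        rw [abs_mul]
        exact mul_le_mul hs.1 (ih k) (abs_nonneg _) zero_le_one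
      linarith [abs_sub ((X * Q).coeff k) (y * Q.coeff k)]
    rw [Finset.prod_insert hy, Finset.card_insert_of_notMem hy, Lagrange.basisDivisor, mul_assoc,
      coeff_C_mul, sub_mul, coeff_sub, coeff_C_mul, abs_mul]
    calc |(x - y)⁻¹| * |(X * Q).coeff k - y * Q.coeff k|
        ≤ r⁻¹ * (2 * (2 / r) ^ s.card) :=
          mul_le_mul hinv hdiff (abs_nonneg _) (inv_nonneg.2 hr.le)
      _ = (2 / r) ^ (s.card + 1) := by rw [pow_succ]; ring

/-- A polynomial of degree at most `d` that is bounded by `δ` at `d + 1` points of `[-1, 1]`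
with mutual distances at least `r` has coefficients at most `(d + 1) * (δ * (2 / r) ^ d)`. -/
theorem abs_coeff_le_of_abs_eval_le {P : ℝ[X]} {d : ℕ} (hP : P.natDegree ≤ d) {r δ : ℝ}
    (hr : 0 < r) {s : Finset ℝ} (hcard : s.card = d + 1)
    (hs : ∀ x ∈ s, |x| ≤ 1) (hsep : (s : Set ℝ).Pairwise fun x y => r ≤ |x - y|)
    (hδ : ∀ x ∈ s, |P.eval x| ≤ δ) (k : ℕ) :
    |P.coeff k| ≤ (d + 1) * (δ * (2 / r) ^ d) := by
  have hdeg : P.degree < s.card := by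
    rw [hcard]
    exact degree_le_natDegree.trans_lt (by exact_mod_cast Nat.lt_succ_of_le hP)
  have hsum := Lagrange.eq_interpolate (v := id) Function.injective_id.injOn hdeg
  rw [Lagrange.interpolate_apply] at hsum
  have hterm : ∀ x ∈ s, |(C (P.eval x) * Lagrange.basis s id x).coeff k|
      ≤ δ * (2 / r) ^ d := by
    intro x hx
    rw [coeff_C_mul, abs_mul]
    refine mul_le_mul (hδ x hx) ?_ (abs_nonneg _) ((abs_nonneg _).trans (hδ x hx))
    have h := abs_coeff_prod_basisDivisor_le hr (s.erase x)
      (fun y hy => hs y (Finset.mem_of_mem_erase hy))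
      (fun y hy => hsep hx (Finset.mem_of_mem_erase hy) (Finset.ne_of_mem_erase hy).symm) k
    rwa [Finset.card_erase_of_mem hx, hcard, Nat.add_sub_cancel] at h
  calc |P.coeff k| = |∑ x ∈ s, (C (P.eval x) * Lagrange.basis s id x).coeff k| := by
        conv_lhs => rw [hsum]
        rw [finsetSum_coeff]
        rfl
    _ ≤ ∑ x ∈ s, |(C (P.eval x) * Lagrange.basis s id x).coeff k| :=
        Finset.abs_sum_le_sum_abs _ _
    _ ≤ s.card • (δ * (2 / r) ^ d) := Finset.sum_le_card_nsmul _ _ _ hterm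
    _ = (d + 1) * (δ * (2 / r) ^ d) := by rw [hcard, nsmul_eq_mul]; push_cast; rfl

/-- For every `d ≥ 1` there is `C(d)` such that: if `P` is a real
polynomial of degree at most `d` in one variable with `max_{1 ≤ i ≤ d} |c_i| ≥ 1`,
then for every `δ > 0` the Lebesgue measure of `{x ∈ [-1,1] : |P(x)| ≤ δ}` is at
most `C(d) δ^{1/d}`. -/
theorem stmt2 (d : ℕ) (hd : 1 ≤ d) :
    ∃ C : ℝ, ∀ P : Polynomial ℝ, P.natDegree ≤ d →
      (∃ i, 1 ≤ i ∧ i ≤ d ∧ 1 ≤ |P.coeff i|) →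
      ∀ δ : ℝ, 0 < δ →
        MeasureTheory.volume {x : ℝ | x ∈ Set.Icc (-1 : ℝ) 1 ∧ |P.eval x| ≤ δ}
          ≤ ENNReal.ofReal (C * δ ^ ((1 : ℝ) / (d : ℝ))) := by
  refine ⟨2 * (2 * (d + 2)) * d, fun P hP ⟨i, _, _, hi⟩ δ hδ => ?_⟩
  by_contra! hlt
  set t : ℝ := δ ^ ((1 : ℝ) / (d : ℝ)) with ht
  have htpos : 0 < t := Real.rpow_pos_of_pos hδ _
  have htpow : t ^ d = δ := by
    rw [ht, one_div]
    exact Real.rpow_inv_natCast_pow hδ.le (by omega)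
  have hr : 0 < 2 * ((d : ℝ) + 2) * t := by positivity
  obtain ⟨s, hcard, hsub, hsep⟩ := exists_finset_separated_of_lt_volume hr (n := d)
    (lt_of_eq_of_lt (congrArg ENNReal.ofReal (by ring)) hlt)
  have hcoeff := abs_coeff_le_of_abs_eval_le hP hr hcard
    (fun x hx => abs_le.2 (hsub hx).1) hsep (fun x hx => (hsub hx).2) i
  have hscale : δ * (2 / (2 * ((d : ℝ) + 2) * t)) ^ d = 1 / ((d : ℝ) + 2) ^ d := by
    have : 2 / (2 * ((d : ℝ) + 2) * t) = 1 / (((d : ℝ) + 2) * t) := by field_simp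
    rw [this, div_pow, mul_pow, htpow, one_pow]
    field_simp
  rw [hscale, mul_one_div] at hcoeff
  have hpow : (d : ℝ) + 2 ≤ ((d : ℝ) + 2) ^ d :=
    le_self_pow₀ (by linarith [(Nat.cast_nonneg d : (0 : ℝ) ≤ d)]) (by omega)
  have := (one_le_div (by positivity)).1 (hi.trans hcoeff)
  linarith
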